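/- Let Ω ⊆ Q be a closed axis-parallel cube with positive volume. Then for all sufficiently large n, for every minimizer Y_n of the quantization energy among subsets of Q with n points, the number of generators y ∈ Y_n whose Voronoi cell intersects the boundary ∂Ω is at most (6Γ₄/(ω₃·Γ₅³))·n^{2/3}, where Γ₄ := (2·12^{1/4}·16^{1/3}/(π^{1/4}·ω₃^{1/12}))·(√(1 + 2⁴·3³/(5²·10³)) − 1)^{−1/2}·(5²·10³/(2²·3³))^{1/4}, Γ₅ := (1/4)·(√(1 + 2⁴·3³/(5²·10³)) − 1)·Γ₃, Γ₃ := ω₃^{−1/5}·Γ₁^{1/5}, Γ₁ := (2/5)^{2/3}/40. -/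

import Mathlib

open MeasureTheory

noncomputable section

/-- Euclidean 3-space. -/
abbrev E3 := EuclideanSpace ℝ (Fin 3)

/-- The closed unit cube Q = [0,1]³. -/
def Qcube : Set E3 := {x | ∀ i, x i ∈ Set.Icc (0 : ℝ) 1}

/-- The quantization energy E(Y) = ∫_Q dist(x,Y)² dx. -/
def quantE (Y : Finset E3) : ℝ := ∫ x in Qcube, (Metric.infDist x (↑Y : Set E3)) ^ 2

/-- The Voronoi cell of a generator y ∈ Y, relative to Q. -/
def vorCell (Y : Finset E3) (y : E3) : Set E3 :=
  {x ∈ Qcube | ∀ z ∈ Y, dist x y ≤ dist x z}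

/-- Y is a minimizer of the quantization energy among n-point subsets of Q. -/
def IsMinimizer (n : ℕ) (Y : Finset E3) : Prop :=
  (↑Y : Set E3) ⊆ Qcube ∧ Y.card = n ∧
    ∀ Z : Finset E3, (↑Z : Set E3) ⊆ Qcube → Z.card = n → quantE Y ≤ quantE Z

/-- ω₃ = 4π/3, the volume of the unit ball in ℝ³. -/
def omega3 : ℝ := 4 * Real.pi / 3

/-- Γ₁ = (2/5)^{2/3} / 40. -/
def Gamma1 : ℝ := ((2 / 5 : ℝ) ^ ((2 : ℝ) / 3)) / 40

/-- Γ₃ = ω₃^{-1/5} Γ₁^{1/5}. -/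
def Gamma3 : ℝ := omega3 ^ (-(1 : ℝ) / 5) * Gamma1 ^ ((1 : ℝ) / 5)

/-- Γ₅ = (1/4)(√(1 + 2⁴·3³/(5²·10³)) − 1) Γ₃. -/
def Gamma5 : ℝ :=
  (1 / 4) * (Real.sqrt (1 + (2 ^ 4 * 3 ^ 3 : ℝ) / (5 ^ 2 * 10 ^ 3)) - 1) * Gamma3

/-- Γ₄, the diameter upper-bound constant. -/
def Gamma4 : ℝ :=
  (2 * (12 : ℝ) ^ ((1 : ℝ) / 4) * (16 : ℝ) ^ ((1 : ℝ) / 3) /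
      (Real.pi ^ ((1 : ℝ) / 4) * omega3 ^ ((1 : ℝ) / 12))) *
    (Real.sqrt (1 + (2 ^ 4 * 3 ^ 3 : ℝ) / (5 ^ 2 * 10 ^ 3)) - 1) ^ (-(1 : ℝ) / 2) *
    ((5 ^ 2 * 10 ^ 3 : ℝ) / (2 ^ 2 * 3 ^ 3)) ^ ((1 : ℝ) / 4)

/-!
Let `Y` be a minimizer with `n` points and compare it with the sets obtained by moving one generator
`y` to some other point `z`: the removal cost of `y` is at least the gain from inserting a
generator at `z`, which is of order `d ^ 5` if `z` has distance `d` from `Y`.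

The balls of radius `n ^ (-1 / 3) / 2` around `Y` do not fill the cube, so there is a `z` with
`d ≥ n ^ (-1 / 3) / 2`, and every removal cost is at least of order `n ^ (-5 / 3)`. On the other
hand discarding half of `Y`, chosen with the help of a grid, raises the energy only by the order of
`n ^ (-2 / 3)`, so some generator has removal cost at most of order `n ^ (-5 / 3)`; hence every `z`
satisfies `d ≤ R` with `R = 8 * n ^ (-1 / 3)`.

The cells are therefore contained in `R`-balls, and the cube being connected, deleting a generator
raises distances in its cell to at most `3 * R`. So the removal costs of the generators whose cells
meet `∂Ω` add up to at most `(3 * R) ^ 2` times the volume of the `2 * R`-neighbourhood of `∂Ω`,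
which is of order `1 / n`. Dividing by the lower bound for each of them gives at most
`216 * 2 ^ 24 * n ^ (2 / 3)` such generators, and the constant in the theorem is larger.
-/

/-! ### Distance to finite sets and Voronoi cells -/

section FiniteSets

open Metric

variable {X : Type*} [PseudoMetricSpace X] {K : Set X} {Y Z : Finset X} {x y : X} {R ρ : ℝ}

lemma exists_mem_infDist_eq_dist (hY : Y.Nonempty) (x : X) : ∃ y ∈ Y, infDist x Y = dist x y :=
  Y.finite_toSet.isCompact.exists_infDist_eq_dist hY x

lemma sq_infDist_anti (hZ : Z.Nonempty) (hZY : Z ⊆ Y) (x : X) :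
    infDist x Y ^ 2 ≤ infDist x Z ^ 2 :=
  pow_le_pow_left₀ infDist_nonneg (infDist_le_infDist_of_subset (mod_cast hZY) hZ) 2

/-- The Voronoi cell, relative to the domain `K`, of the generator `y` of `Y`; the cells of `Qcube`
are the sets `vorCell`. -/
def voronoiCell (K : Set X) (Y : Finset X) (y : X) : Set X :=
  {x ∈ K | ∀ z ∈ Y, dist x y ≤ dist x z}

lemma dist_le_infDist_of_mem_voronoiCell (hY : Y.Nonempty) (hx : x ∈ voronoiCell K Y y) :
    dist x y ≤ infDist x Y :=
  (le_infDist (s := (Y : Set X)) hY).2 fun _ hz => hx.2 _ hz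

lemma mem_voronoiCell_of_infDist_eq (hx : x ∈ K) (hxy : infDist x Y = dist x y) :
    x ∈ voronoiCell K Y y :=
  ⟨hx, fun _ hz => hxy ▸ infDist_le_dist_of_mem hz⟩

lemma infDist_erase_eq [DecidableEq X] {z : X} (hz : z ∈ Y) (hxz : infDist x Y = dist x z)
    (hne : y ≠ z) : infDist x (Y.erase y) = infDist x Y := by
  have hz' : z ∈ Y.erase y := Finset.mem_erase.2 ⟨hne.symm, hz⟩
  refine le_antisymm (hxz ▸ infDist_le_dist_of_mem hz') ?_
  exact infDist_le_infDist_of_subset (mod_cast Y.erase_subset y) ⟨z, hz'⟩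

-- Deleting a generator changes the distance only at points for which it is the unique nearest one.
lemma sum_sq_infDist_erase_sub_le [DecidableEq X] (hY : Y.Nonempty) {S : Finset X} {c : ℝ}
    (hc : 0 ≤ c) (hx : x ∈ K)
    (h : ∀ y ∈ S, x ∈ voronoiCell K Y y → infDist x (Y.erase y) ^ 2 - infDist x Y ^ 2 ≤ c) :
    ∑ y ∈ S, (infDist x (Y.erase y) ^ 2 - infDist x Y ^ 2) ≤ c := by
  obtain ⟨z, hzY, hxz⟩ := exists_mem_infDist_eq_dist hY x
  have excess_eq_zero (y : X) (hy : y ≠ z) : infDist x (Y.erase y) ^ 2 - infDist x Y ^ 2 = 0 := by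
    rw [infDist_erase_eq hzY hxz hy, sub_self]
  by_cases hzS : z ∈ S
  · rw [Finset.sum_eq_single_of_mem z hzS fun y _ => excess_eq_zero y]
    exact h z hzS (mem_voronoiCell_of_infDist_eq hx hxz)
  · rwa [Finset.sum_eq_zero fun y hy => excess_eq_zero y (ne_of_mem_of_not_mem hy hzS)]

lemma exists_subset_card_le_infDist_le_add (hY : Y.Nonempty) {G : Finset X} (hG : G.Nonempty)
    (hcover : ∀ x ∈ K, infDist x G ≤ ρ) :
    ∃ Z ⊆ Y, Z.Nonempty ∧ Z.card ≤ G.card ∧ ∀ x ∈ K, infDist x Z ≤ infDist x Y + 2 * ρ := by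
  classical
  choose nearest nearest_mem infDist_eq using exists_mem_infDist_eq_dist hY
  refine ⟨G.image nearest, Finset.image_subset_iff.2 fun g _ => nearest_mem g, hG.image _,
    Finset.card_image_le, fun x hx => ?_⟩
  obtain ⟨g, hg, hxg⟩ := exists_mem_infDist_eq_dist hG x
  have hgρ : dist x g ≤ ρ := hxg ▸ hcover x hx
  calc infDist x (G.image nearest)
      ≤ dist x (nearest g) := infDist_le_dist_of_mem (Finset.mem_image_of_mem _ hg)
    _ ≤ dist x g + dist g (nearest g) := dist_triangle _ _ _
    _ = dist x g + infDist g Y := by rw [infDist_eq]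
    _ ≤ dist x g + (infDist x Y + dist g x) := by gcongr; exact infDist_le_infDist_add_dist
    _ ≤ infDist x Y + 2 * ρ := by rw [dist_comm g x]; linarith

-- The `R`-balls around `y` and around the remaining generators are closed and cover `K`, so they
-- cannot be disjoint.
lemma exists_mem_erase_dist_le [DecidableEq X] (hK : IsPreconnected K) (hYK : (Y : Set X) ⊆ K)
    (hcover : ∀ x ∈ K, infDist x Y ≤ R) (hy : y ∈ Y) (hne : (Y.erase y).Nonempty) :
    ∃ z ∈ Y.erase y, dist y z ≤ 2 * R := by
  obtain ⟨w, hw⟩ := hne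
  have hwY := Finset.mem_of_mem_erase hw
  have hR : 0 ≤ R := infDist_nonneg.trans (hcover y (hYK hy))
  have hclosed : IsClosed (⋃ z ∈ Y.erase y, closedBall z R) :=
    (Y.erase y).finite_toSet.isClosed_biUnion fun _ _ => isClosed_closedBall
  obtain ⟨p, -, hpy, hpU⟩ := isPreconnected_closed_iff.1 hK (closedBall y R) _
    isClosed_closedBall hclosed
    (fun x hx => by
      obtain ⟨z, hz, hxz⟩ := exists_mem_infDist_eq_dist ⟨y, hy⟩ x
      have hxR : x ∈ closedBall z R := mem_closedBall.2 (hxz ▸ hcover x hx)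
      by_cases hzy : z = y
      · exact Or.inl (hzy ▸ hxR)
      · exact Or.inr (Set.mem_biUnion (Finset.mem_erase.2 ⟨hzy, hz⟩) hxR))
    ⟨y, hYK hy, mem_closedBall_self hR⟩
    ⟨w, hYK hwY, Set.mem_biUnion hw (mem_closedBall_self hR)⟩
  obtain ⟨z, hz, hpz⟩ := Set.mem_iUnion₂.1 hpU
  refine ⟨z, hz, (dist_triangle_left y z p).trans ?_⟩
  rw [mem_closedBall] at hpy hpz
  linarith

lemma infDist_erase_le_of_mem_voronoiCell [DecidableEq X] (hK : IsPreconnected K)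
    (hYK : (Y : Set X) ⊆ K) (hcover : ∀ x ∈ K, infDist x Y ≤ R) (hy : y ∈ Y)
    (hne : (Y.erase y).Nonempty) (hx : x ∈ voronoiCell K Y y) :
    infDist x (Y.erase y) ≤ 3 * R := by
  obtain ⟨z, hz, hyz⟩ := exists_mem_erase_dist_le hK hYK hcover hy hne
  have hxy : dist x y ≤ R := (dist_le_infDist_of_mem_voronoiCell ⟨y, hy⟩ hx).trans (hcover x hx.1)
  calc infDist x (Y.erase y) ≤ dist x z := infDist_le_dist_of_mem hz
    _ ≤ dist x y + dist y z := dist_triangle _ _ _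
    _ ≤ 3 * R := by linarith

lemma voronoiCell_subset_cthickening {F : Set X} (hcover : ∀ x ∈ K, infDist x Y ≤ R) (hy : y ∈ Y)
    (hF : (voronoiCell K Y y ∩ F).Nonempty) : voronoiCell K Y y ⊆ cthickening (2 * R) F := by
  obtain ⟨p, hp, hpF⟩ := hF
  intro x hx
  have dist_le {q : X} (hq : q ∈ voronoiCell K Y y) : dist q y ≤ R :=
    (dist_le_infDist_of_mem_voronoiCell ⟨y, hy⟩ hq).trans (hcover q hq.1)
  refine mem_cthickening_of_dist_le x p _ F hpF ((dist_triangle_right x p y).trans ?_)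
  linarith [dist_le hx, dist_le hp]

lemma exists_lt_infDist_of_sum_measure_closedBall_lt [MeasurableSpace X] {μ : Measure X}
    (hY : Y.Nonempty) (h : ∑ y ∈ Y, μ (closedBall y R) < μ K) : ∃ z ∈ K, R < infDist z Y := by
  by_contra! hcover
  have hsub : K ⊆ ⋃ y ∈ Y, closedBall y R := fun z hz => by
    obtain ⟨y, hy, hzy⟩ := exists_mem_infDist_eq_dist hY z
    exact Set.mem_biUnion hy (mem_closedBall.2 (hzy ▸ hcover z hz))
  exact h.not_ge ((measure_mono hsub).trans (measure_biUnion_finset_le Y _))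

end FiniteSets

/-! ### Quantization energy -/

section Energy

open Metric

variable {X : Type*} [MetricSpace X] [MeasurableSpace X]

/-- The quantization energy of `Y` with respect to the measure `μ` on the domain `K`, so that
`quantE` is the energy of Lebesgue measure on `Qcube`. -/
def quantEnergy (μ : Measure X) (K : Set X) (Y : Finset X) : ℝ :=
  ∫ x in K, infDist x Y ^ 2 ∂μ

/-- The increase of the quantization energy when the generator `y` is removed from `Y`. Its value at
`Y = {y}` is meaningless, because `infDist x ∅ = 0`. -/
def removalCost [DecidableEq X] (μ : Measure X) (K : Set X) (Y : Finset X) (y : X) : ℝ :=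
  quantEnergy μ K (Y.erase y) - quantEnergy μ K Y

/-- `Y` minimizes the quantization energy among the subsets of `K` with as many points as `Y`. -/
structure IsOptimalQuantizer (μ : Measure X) (K : Set X) (Y : Finset X) : Prop where
  subset : (Y : Set X) ⊆ K
  le_of_card_eq : ∀ Z : Finset X, (Z : Set X) ⊆ K → Z.card = Y.card →
    quantEnergy μ K Y ≤ quantEnergy μ K Z

variable [OpensMeasurableSpace X] {μ : Measure X} [IsFiniteMeasureOnCompacts μ] {K : Set X}
  {Y Z : Finset X} {y z : X} {R δ ρ : ℝ}

lemma integrableOn_sq_infDist (hK : IsCompact K) (Y : Finset X) :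
    IntegrableOn (fun x => infDist x Y ^ 2) K μ :=
  ((continuous_infDist_pt _).pow 2).continuousOn.integrableOn_compact hK

lemma quantEnergy_anti (hK : IsCompact K) (hZ : Z.Nonempty) (hZY : Z ⊆ Y) :
    quantEnergy μ K Y ≤ quantEnergy μ K Z :=
  setIntegral_mono (integrableOn_sq_infDist hK Y) (integrableOn_sq_infDist hK Z)
    (sq_infDist_anti hZ hZY)

lemma quantEnergy_le_of_infDist_le (hK : IsCompact K) (hcover : ∀ x ∈ K, infDist x Y ≤ ρ) :
    quantEnergy μ K Y ≤ ρ ^ 2 * μ.real K := by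
  calc quantEnergy μ K Y ≤ ∫ _ in K, ρ ^ 2 ∂μ :=
        setIntegral_mono_on (integrableOn_sq_infDist hK Y)
          (integrableOn_const hK.measure_ne_top) hK.measurableSet
          fun x hx => pow_le_pow_left₀ infDist_nonneg (hcover x hx) 2
    _ = ρ ^ 2 * μ.real K := by rw [setIntegral_const, smul_eq_mul, mul_comm]

lemma quantEnergy_le_of_infDist_le_add (hK : IsCompact K)
    (h : ∀ x ∈ K, infDist x Z ≤ infDist x Y + R) :
    quantEnergy μ K Z ≤ 2 * quantEnergy μ K Y + 2 * R ^ 2 * μ.real K := by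
  have hint : IntegrableOn (fun x => 2 * infDist x Y ^ 2) K μ :=
    (integrableOn_sq_infDist hK Y).const_mul 2
  have hconst : IntegrableOn (fun _ => 2 * R ^ 2) K μ := integrableOn_const hK.measure_ne_top
  calc quantEnergy μ K Z ≤ ∫ x in K, (2 * infDist x Y ^ 2 + 2 * R ^ 2) ∂μ :=
        setIntegral_mono_on (integrableOn_sq_infDist hK Z) (Integrable.fun_add hint hconst)
          hK.measurableSet fun x hx => (pow_le_pow_left₀ infDist_nonneg (h x hx) 2).trans <| by
            rw [← mul_add]; exact add_sq_le
    _ = 2 * quantEnergy μ K Y + 2 * R ^ 2 * μ.real K := by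
        rw [integral_add hint hconst, integral_const_mul, setIntegral_const, smul_eq_mul,
          mul_comm (μ.real K), quantEnergy]

-- On `closedBall z (δ / 4)` the distance drops from at least `3 * δ / 4` to at most `δ / 4`.
lemma quantEnergy_insert_add_le [DecidableEq X] (hK : IsCompact K) (hY : Y.Nonempty)
    (hδ : 0 ≤ δ) (hz : δ ≤ infDist z Y) :
    quantEnergy μ K (insert z Y) + δ ^ 2 / 2 * μ.real (K ∩ closedBall z (δ / 4)) ≤
      quantEnergy μ K Y := by
  have hball : MeasurableSet (closedBall z (δ / 4)) := isClosed_closedBall.measurableSet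
  have hind : IntegrableOn ((closedBall z (δ / 4)).indicator fun _ => δ ^ 2 / 2) K μ :=
    (integrableOn_const hK.measure_ne_top).indicator hball
  have hint : ∫ x in K, (closedBall z (δ / 4)).indicator (fun _ => δ ^ 2 / 2) x ∂μ =
      δ ^ 2 / 2 * μ.real (K ∩ closedBall z (δ / 4)) := by
    rw [setIntegral_indicator hball, setIntegral_const, smul_eq_mul, mul_comm]
  rw [← hint, quantEnergy, ← integral_add (integrableOn_sq_infDist hK _) hind]
  refine setIntegral_mono ((integrableOn_sq_infDist hK _).add hind) (integrableOn_sq_infDist hK Y)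
    fun x => ?_
  by_cases hx : x ∈ closedBall z (δ / 4)
  · have hxz : dist x z ≤ δ / 4 := hx
    have hnew : infDist x (insert z Y : Finset X) ≤ δ / 4 :=
      (infDist_le_dist_of_mem (Finset.mem_insert_self z Y)).trans hxz
    have hold : 3 * δ / 4 ≤ infDist x Y := by
      have := infDist_le_infDist_add_dist (s := (Y : Set X)) (x := z) (y := x)
      rw [dist_comm] at this
      linarith
    have hnew_sq := pow_le_pow_left₀ infDist_nonneg hnew 2
    have hold_sq := pow_le_pow_left₀ (by positivity) hold 2
    simp only [Set.indicator_of_mem hx]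
    linarith
  · simpa only [Set.indicator_of_notMem hx, add_zero] using
      sq_infDist_anti hY (Finset.subset_insert z Y) x

lemma sum_removalCost_le_integral [DecidableEq X] (hK : IsCompact K) (hY : Y.Nonempty)
    {S : Finset X} {f : X → ℝ} (hf : IntegrableOn f K μ) (hf0 : ∀ x ∈ K, 0 ≤ f x)
    (h : ∀ y ∈ S, ∀ x ∈ voronoiCell K Y y, infDist x (Y.erase y) ^ 2 - infDist x Y ^ 2 ≤ f x) :
    ∑ y ∈ S, removalCost μ K Y y ≤ ∫ x in K, f x ∂μ := by
  have hint (y : X) : IntegrableOn (fun x => infDist x (Y.erase y) ^ 2 - infDist x Y ^ 2) K μ :=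
    (integrableOn_sq_infDist hK _).sub (integrableOn_sq_infDist hK Y)
  calc ∑ y ∈ S, removalCost μ K Y y
      = ∑ y ∈ S, ∫ x in K, (infDist x (Y.erase y) ^ 2 - infDist x Y ^ 2) ∂μ :=
        Finset.sum_congr rfl fun y _ =>
          (integral_sub (integrableOn_sq_infDist hK _) (integrableOn_sq_infDist hK Y)).symm
    _ = ∫ x in K, ∑ y ∈ S, (infDist x (Y.erase y) ^ 2 - infDist x Y ^ 2) ∂μ :=
        (integral_finsetSum S fun y _ => hint y).symm
    _ ≤ ∫ x in K, f x ∂μ :=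
        setIntegral_mono_on (integrable_finsetSum S fun y _ => hint y) hf hK.measurableSet
          fun x hx => sum_sq_infDist_erase_sub_le hY (hf0 x hx) hx fun y hy => h y hy x

lemma sum_removalCost_sdiff_le [DecidableEq X] (hK : IsCompact K) (hZ : Z.Nonempty)
    (hZY : Z ⊆ Y) :
    ∑ y ∈ Y \ Z, removalCost μ K Y y ≤ quantEnergy μ K Z - quantEnergy μ K Y := by
  have hZi := integrableOn_sq_infDist hK Z (μ := μ)
  have hYi := integrableOn_sq_infDist hK Y (μ := μ)
  rw [quantEnergy, quantEnergy, ← integral_sub hZi hYi]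
  refine sum_removalCost_le_integral hK (hZ.mono hZY) (hZi.sub hYi)
    (fun x _ => sub_nonneg.2 (sq_infDist_anti hZ hZY x)) fun y hy x _ => ?_
  have hZerase : Z ⊆ Y.erase y := Finset.subset_erase.2 ⟨hZY, (Finset.mem_sdiff.1 hy).2⟩
  exact sub_le_sub_right (sq_infDist_anti hZ hZerase x) _

lemma card_mul_le_of_voronoiCell_inter_nonempty [DecidableEq X] (hK : IsCompact K)
    (hconn : IsPreconnected K) (hYK : (Y : Set X) ⊆ K) (hY : 2 ≤ Y.card)
    (hcover : ∀ x ∈ K, infDist x Y ≤ R) {c : ℝ} {S : Finset X} {F : Set X} (hSY : S ⊆ Y)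
    (hc : ∀ y ∈ S, c ≤ removalCost μ K Y y)
    (hF : ∀ y ∈ S, (voronoiCell K Y y ∩ F).Nonempty) :
    S.card * c ≤ (3 * R) ^ 2 * μ.real (K ∩ cthickening (2 * R) F) := by
  have hmeas : MeasurableSet (cthickening (2 * R) F) := isClosed_cthickening.measurableSet
  have hint : IntegrableOn ((cthickening (2 * R) F).indicator fun _ => (3 * R) ^ 2) K μ :=
    (integrableOn_const hK.measure_ne_top).indicator hmeas
  calc S.card * c = S.card • c := (nsmul_eq_mul _ _).symm
    _ ≤ ∑ y ∈ S, removalCost μ K Y y := S.card_nsmul_le_sum _ _ hc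
    _ ≤ ∫ x in K, (cthickening (2 * R) F).indicator (fun _ => (3 * R) ^ 2) x ∂μ := by
        refine sum_removalCost_le_integral hK (Finset.card_pos.1 (by lia)) hint
          (fun x _ => Set.indicator_nonneg (fun _ _ => sq_nonneg _) x) fun y hy x hx => ?_
        have hne : (Y.erase y).Nonempty := by
          rw [← Finset.card_pos, Finset.card_erase_of_mem (hSY hy)]; lia
        rw [Set.indicator_of_mem (voronoiCell_subset_cthickening hcover (hSY hy) (hF y hy) hx)]
        exact (sub_le_self _ (sq_nonneg _)).trans <| pow_le_pow_left₀ infDist_nonneg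
          (infDist_erase_le_of_mem_voronoiCell hconn hYK hcover (hSY hy) hne hx) 2
    _ = (3 * R) ^ 2 * μ.real (K ∩ cthickening (2 * R) F) := by
        rw [setIntegral_indicator hmeas, setIntegral_const, smul_eq_mul, mul_comm]

end Energy

/-! ### Optimal quantizers -/

namespace IsOptimalQuantizer

open Metric

variable {X : Type*} [MetricSpace X] [MeasurableSpace X] [OpensMeasurableSpace X]
  {μ : Measure X} [IsFiniteMeasureOnCompacts μ] {K : Set X} {Y : Finset X} {δ ρ : ℝ}

lemma quantEnergy_le (hY : IsOptimalQuantizer μ K Y) (hK : IsCompact K) {Z : Finset X}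
    (hZK : (Z : Set X) ⊆ K) (hZ : Z.Nonempty) (hcard : Z.card ≤ Y.card) :
    quantEnergy μ K Y ≤ quantEnergy μ K Z := by
  classical
  obtain ⟨W, hZW, hWZY, hW⟩ := Finset.exists_subsuperset_card_eq
    (Finset.subset_union_left (s₂ := Y)) hcard (Finset.card_le_card Finset.subset_union_right)
  have hWK : (W : Set X) ⊆ K := by
    refine (Finset.coe_subset.2 hWZY).trans ?_
    rw [Finset.coe_union]
    exact Set.union_subset hZK hY.subset
  exact (hY.le_of_card_eq W hWK hW).trans (quantEnergy_anti hK hZ hZW)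

-- Compare `Y` with the competitor in which `y` is moved to `z`.
lemma le_removalCost [DecidableEq X] (hY : IsOptimalQuantizer μ K Y) (hK : IsCompact K)
    (hcard : 2 ≤ Y.card) {y z : X} (hy : y ∈ Y) (hz : z ∈ K) (hδ : 0 ≤ δ)
    (hδz : δ ≤ infDist z Y) :
    δ ^ 2 / 2 * μ.real (K ∩ closedBall z (δ / 4)) ≤ removalCost μ K Y y := by
  have herase : (Y.erase y).card = Y.card - 1 := Finset.card_erase_of_mem hy
  have hne : (Y.erase y).Nonempty := Finset.card_pos.1 (by lia)
  have hgain := quantEnergy_insert_add_le (μ := μ) hK hne hδ <|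
    hδz.trans (infDist_le_infDist_of_subset (mod_cast Y.erase_subset y) hne)
  have hmin : quantEnergy μ K Y ≤ quantEnergy μ K (insert z (Y.erase y)) := by
    refine hY.quantEnergy_le hK ?_ (Finset.insert_nonempty _ _) ?_
    · rw [Finset.coe_insert]
      exact Set.insert_subset hz ((Finset.coe_subset.2 (Y.erase_subset y)).trans hY.subset)
    · have := Finset.card_insert_le z (Y.erase y)
      lia
  rw [removalCost]
  linarith

-- Thinning `Y` to at most half its points by means of the net `G` keeps the energy of order
-- `ρ ^ 2`, so the average cost of removing a discarded point is of order `ρ ^ 2 / Y.card`.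
lemma exists_removalCost_le [DecidableEq X] (hY : IsOptimalQuantizer μ K Y) (hK : IsCompact K)
    {G : Finset X} (hG : G.Nonempty) (hGK : (G : Set X) ⊆ K)
    (hcover : ∀ x ∈ K, infDist x G ≤ ρ) (hcard : 2 * G.card ≤ Y.card) :
    ∃ y ∈ Y, removalCost μ K Y y ≤ 18 * ρ ^ 2 * μ.real K / Y.card := by
  have hGpos := hG.card_pos
  obtain ⟨Z, hZY, hZ, hZcard, hZdist⟩ :=
    exists_subset_card_le_infDist_le_add (Finset.card_pos.1 (by lia : 0 < Y.card)) hG hcover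
  have hsdiff : Y.card ≤ 2 * (Y \ Z).card := by rw [Finset.card_sdiff_of_subset hZY]; lia
  have hYpos : (0 : ℝ) < Y.card := by exact_mod_cast (by lia : 0 < Y.card)
  have hYE : quantEnergy μ K Y ≤ ρ ^ 2 * μ.real K :=
    (hY.quantEnergy_le hK hGK hG (by lia)).trans (quantEnergy_le_of_infDist_le hK hcover)
  have hZE := quantEnergy_le_of_infDist_le_add (μ := μ) hK hZdist
  have hsum : ∑ y ∈ Y \ Z, removalCost μ K Y y ≤
      ∑ _y ∈ Y \ Z, 18 * ρ ^ 2 * μ.real K / Y.card := by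
    calc ∑ y ∈ Y \ Z, removalCost μ K Y y ≤ quantEnergy μ K Z - quantEnergy μ K Y :=
          sum_removalCost_sdiff_le hK hZ hZY
      _ ≤ 9 * ρ ^ 2 * μ.real K := by linarith
      _ = Y.card / 2 * (18 * ρ ^ 2 * μ.real K / Y.card) := by field_simp; ring
      _ ≤ (Y \ Z).card * (18 * ρ ^ 2 * μ.real K / Y.card) := by
          gcongr
          rw [div_le_iff₀' two_pos]
          exact_mod_cast hsdiff
      _ = ∑ _y ∈ Y \ Z, 18 * ρ ^ 2 * μ.real K / Y.card := by
          rw [Finset.sum_const, nsmul_eq_mul]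
  obtain ⟨y, hy, hcost⟩ := Finset.exists_le_of_sum_le (Finset.card_pos.1 (by lia)) hsum
  exact ⟨y, Finset.sdiff_subset hy, hcost⟩

lemma sq_infDist_mul_measureReal_le (hY : IsOptimalQuantizer μ K Y) (hK : IsCompact K)
    {G : Finset X} (hG : G.Nonempty) (hGK : (G : Set X) ⊆ K)
    (hcover : ∀ x ∈ K, infDist x G ≤ ρ) (hcard : 2 * G.card ≤ Y.card) {z : X} (hz : z ∈ K) :
    infDist z Y ^ 2 / 2 * μ.real (K ∩ closedBall z (infDist z Y / 4)) ≤
      18 * ρ ^ 2 * μ.real K / Y.card := by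
  classical
  have hGpos := hG.card_pos
  obtain ⟨y, hy, hcost⟩ := hY.exists_removalCost_le hK hG hGK hcover hcard
  exact (hY.le_removalCost hK (by lia) hy hz infDist_nonneg le_rfl).trans hcost

end IsOptimalQuantizer

/-! ### Boxes in Euclidean space -/

section Boxes

open Metric

variable {ι : Type*} {l u : ι → ℝ} {x y z : EuclideanSpace ℝ ι} {r s : ℝ}

/-- The closed axis-parallel box with lower corner `l` and upper corner `u`. -/
def euclideanBox (l u : ι → ℝ) : Set (EuclideanSpace ℝ ι) :=
  {x | ∀ i, x i ∈ Set.Icc (l i) (u i)}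

/-- The cube `[0, 1] ^ ι`, which is `Qcube` for `ι = Fin 3`. -/
def unitCube (ι : Type*) : Set (EuclideanSpace ℝ ι) :=
  euclideanBox (fun _ => 0) (fun _ => 1)

lemma euclideanBox_eq_preimage (l u : ι → ℝ) :
    euclideanBox l u = WithLp.ofLp ⁻¹' Set.Icc l u := by
  ext x
  exact forall_and

lemma isCompact_euclideanBox (l u : ι → ℝ) : IsCompact (euclideanBox l u) := by
  rw [euclideanBox_eq_preimage]
  exact (PiLp.homeomorph 2 fun _ : ι => ℝ).isCompact_preimage.2 isCompact_Icc

lemma isPreconnected_euclideanBox (l u : ι → ℝ) : IsPreconnected (euclideanBox l u) := by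
  rw [euclideanBox_eq_preimage]
  exact (PiLp.homeomorph 2 fun _ : ι => ℝ).isPreconnected_preimage.2
    (convex_Icc l u).isPreconnected

lemma isCompact_unitCube : IsCompact (unitCube ι) := isCompact_euclideanBox _ _

lemma exists_apply_eq_of_mem_frontier_euclideanBox [Finite ι]
    (hx : x ∈ frontier (euclideanBox l u)) : ∃ i, x i = l i ∨ x i = u i := by
  have hmem : x ∈ euclideanBox l u := (isCompact_euclideanBox l u).isClosed.frontier_subset hx
  by_contra! hne
  refine hx.2 (mem_interior_iff_mem_nhds.2 (Filter.eventually_all.2 fun i => ?_))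
  have hcont : Continuous fun y : EuclideanSpace ℝ ι => y i := by fun_prop
  exact hcont.continuousAt.eventually <| Icc_mem_nhds
    ((hmem i).1.lt_of_ne' (hne i).1) ((hmem i).2.lt_of_ne (hne i).2)

variable [Fintype ι]

lemma abs_apply_sub_le_dist (x y : EuclideanSpace ℝ ι) (i : ι) : |x i - y i| ≤ dist x y := by
  simpa [dist_eq_norm] using PiLp.norm_apply_le (x - y) i

lemma dist_le_sqrt_card_mul (hs : 0 ≤ s) (h : ∀ i, |x i - y i| ≤ s) :
    dist x y ≤ √(Fintype.card ι) * s := by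
  rw [EuclideanSpace.dist_eq, ← Real.sqrt_sq hs, ← Real.sqrt_mul (Nat.cast_nonneg _)]
  refine Real.sqrt_le_sqrt ?_
  rw [← nsmul_eq_mul]
  exact Finset.sum_le_card_nsmul _ _ _ fun i _ => pow_le_pow_left₀ dist_nonneg (h i) 2

lemma volume_real_euclideanBox (h : l ≤ u) :
    volume.real (euclideanBox l u) = ∏ i, (u i - l i) := by
  have hpres := (EuclideanSpace.volume_preserving_symm_measurableEquiv_toLp ι).measure_preimage
    (measurableSet_Icc (a := l) (b := u)).nullMeasurableSet
  rw [euclideanBox_eq_preimage, measureReal_def]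
  exact (congrArg ENNReal.toReal hpres).trans (Real.volume_Icc_pi_toReal h)

lemma volume_real_unitCube : volume.real (unitCube ι) = 1 := by
  simp [unitCube, volume_real_euclideanBox (fun _ => zero_le_one)]

lemma dist_le_of_mem_unitCube (hx : x ∈ unitCube ι) (hy : y ∈ unitCube ι) :
    dist x y ≤ √(Fintype.card ι) := by
  have hxy (i : ι) : |x i - y i| ≤ 1 :=
    abs_le.2 ⟨by linarith [(hx i).1, (hy i).2], by linarith [(hx i).2, (hy i).1]⟩
  simpa only [mul_one] using dist_le_sqrt_card_mul zero_le_one hxy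

-- At every point of the cube some orthant fits a cube of side `1 / 2`.
lemma pow_card_le_volume_unitCube_inter_closedBall (hz : z ∈ unitCube ι) (hs : 0 ≤ s)
    (hs' : s ≤ 1 / 2) (hr : √(Fintype.card ι) * s ≤ r) :
    s ^ Fintype.card ι ≤ volume.real (unitCube ι ∩ closedBall z r) := by
  set corner : ι → ℝ := fun i => if z i ≤ 1 / 2 then z i else z i - s with hcorner
  have hsub : euclideanBox corner (fun i => corner i + s) ⊆ unitCube ι ∩ closedBall z r := by
    intro x hx
    have hbounds (i : ι) : x i ∈ Set.Icc (0 : ℝ) 1 ∧ |x i - z i| ≤ s := by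
      obtain ⟨hx0, hx1⟩ := hx i
      obtain ⟨hz0, hz1⟩ := hz i
      rw [abs_le]
      simp only [hcorner] at hx0 hx1
      split_ifs at hx0 hx1 <;> refine ⟨⟨?_, ?_⟩, ?_, ?_⟩ <;> linarith
    exact ⟨fun i => (hbounds i).1, (dist_le_sqrt_card_mul hs fun i => (hbounds i).2).trans hr⟩
  calc s ^ Fintype.card ι = volume.real (euclideanBox corner fun i => corner i + s) := by
        simp [volume_real_euclideanBox fun _ => le_add_of_nonneg_right hs]
    _ ≤ volume.real (unitCube ι ∩ closedBall z r) :=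
        measureReal_mono hsub
          (measure_ne_top_of_subset Set.inter_subset_left isCompact_unitCube.measure_ne_top)

lemma volume_unitCube_inter_slab_le (hr : 0 ≤ r) (i : ι) (c : ℝ) :
    volume.real (unitCube ι ∩ {x | |x i - c| ≤ r}) ≤ 2 * r := by
  classical
  set l : ι → ℝ := Function.update 0 i (c - r) with hl
  set u : ι → ℝ := Function.update 1 i (c + r) with hu
  have hlu : l ≤ u := by
    rw [hl, hu, update_le_update_iff]
    exact ⟨by linarith, fun _ _ => zero_le_one⟩
  have hsub : unitCube ι ∩ {x | |x i - c| ≤ r} ⊆ euclideanBox l u := by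
    rintro x ⟨hx, hxi⟩ j
    obtain rfl | hj := eq_or_ne j i
    · obtain ⟨hlo, hhi⟩ := abs_le.1 (show |x _ - c| ≤ r from hxi)
      simp only [hl, hu, Function.update_self, Set.mem_Icc]
      constructor <;> linarith
    · simpa [hl, hu, hj] using hx j
  calc volume.real (unitCube ι ∩ {x | |x i - c| ≤ r})
      ≤ volume.real (euclideanBox l u) :=
        measureReal_mono hsub (isCompact_euclideanBox l u).measure_ne_top
    _ = u i - l i := by
        rw [volume_real_euclideanBox hlu]
        exact Fintype.prod_eq_single i fun j hj => by simp [hl, hu, hj]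
    _ = 2 * r := by simp only [hl, hu, Function.update_self]; ring

lemma volume_unitCube_inter_cthickening_frontier_le (hr : 0 ≤ r) (l u : ι → ℝ) :
    volume.real (unitCube ι ∩ cthickening r (frontier (euclideanBox l u))) ≤
      Fintype.card ι * (4 * r) := by
  set slab : ι → ℝ → Set (EuclideanSpace ℝ ι) := fun i c => unitCube ι ∩ {x | |x i - c| ≤ r}
  have hsub : unitCube ι ∩ cthickening r (frontier (euclideanBox l u)) ⊆
      ⋃ i, (slab i (l i) ∪ slab i (u i)) := by
    rintro x ⟨hx, hxF⟩
    rw [isClosed_frontier.cthickening_eq_biUnion_closedBall hr] at hxF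
    obtain ⟨p, hpF, hxp⟩ := Set.mem_iUnion₂.1 hxF
    obtain ⟨i, hi⟩ := exists_apply_eq_of_mem_frontier_euclideanBox hpF
    have hxpi : |x i - p i| ≤ r := (abs_apply_sub_le_dist x p i).trans hxp
    refine Set.mem_iUnion.2 ⟨i, ?_⟩
    rcases hi with hi | hi <;> rw [hi] at hxpi
    · exact Or.inl ⟨hx, hxpi⟩
    · exact Or.inr ⟨hx, hxpi⟩
  have hfinite : volume (⋃ i, (slab i (l i) ∪ slab i (u i))) ≠ ⊤ :=
    measure_ne_top_of_subset
      (Set.iUnion_subset fun i => Set.union_subset Set.inter_subset_left Set.inter_subset_left)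
      (isCompact_unitCube (ι := ι)).measure_ne_top
  calc volume.real (unitCube ι ∩ cthickening r (frontier (euclideanBox l u)))
      ≤ volume.real (⋃ i, (slab i (l i) ∪ slab i (u i))) := measureReal_mono hsub hfinite
    _ ≤ ∑ i, volume.real (slab i (l i) ∪ slab i (u i)) := measureReal_iUnion_fintype_le _
    _ ≤ ∑ _i : ι, 4 * r := Finset.sum_le_sum fun i _ =>
        (measureReal_union_le _ _).trans <| by
          linarith [volume_unitCube_inter_slab_le hr i (l i),
            volume_unitCube_inter_slab_le hr i (u i)]
    _ = Fintype.card ι * (4 * r) := by simp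

lemma exists_fin_abs_sub_midpoint_le {m : ℕ} (hm : 0 < m) {t : ℝ} (ht : t ∈ Set.Icc (0 : ℝ) 1) :
    ∃ k : Fin m, |t - (k + 1 / 2) / m| ≤ 1 / (2 * m) := by
  have hm' : (0 : ℝ) < m := by exact_mod_cast hm
  suffices ∃ k : Fin m, |t * m - k - 1 / 2| ≤ 1 / 2 by
    obtain ⟨k, hk⟩ := this
    refine ⟨k, ?_⟩
    rw [show t - (k + 1 / 2) / m = (t * m - k - 1 / 2) / m by field_simp; ring, abs_div,
      abs_of_pos hm', ← div_div]
    gcongr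
  obtain rfl | ht1 := ht.2.eq_or_lt
  · refine ⟨⟨m - 1, by lia⟩, ?_⟩
    rw [abs_le]
    push_cast [Nat.one_le_iff_ne_zero.2 hm.ne']
    constructor <;> linarith
  · have htm : 0 ≤ t * m := mul_nonneg ht.1 hm'.le
    refine ⟨⟨⌊t * m⌋₊, (Nat.floor_lt htm).2 (by nlinarith)⟩, ?_⟩
    have := Nat.floor_le htm
    have := Nat.lt_floor_add_one (t * m)
    rw [abs_le]
    constructor <;> linarith

-- The centres of the `m ^ card ι` subcubes of side `1 / m` form the net.
lemma exists_net_unitCube (ι : Type*) [Fintype ι] {m : ℕ} (hm : 0 < m) :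
    ∃ G : Finset (EuclideanSpace ℝ ι), G.Nonempty ∧ (G : Set (EuclideanSpace ℝ ι)) ⊆ unitCube ι ∧
      G.card ≤ m ^ Fintype.card ι ∧
      ∀ x ∈ unitCube ι, infDist x G ≤ √(Fintype.card ι) * (1 / (2 * m)) := by
  classical
  have : Nonempty (Fin m) := ⟨⟨0, hm⟩⟩
  set centre : (ι → Fin m) → EuclideanSpace ℝ ι :=
    fun k => WithLp.toLp 2 fun i => ((k i : ℝ) + 1 / 2) / m
  refine ⟨Finset.univ.image centre, Finset.univ_nonempty.image _, ?_,
    Finset.card_image_le.trans (by simp), fun x hx => ?_⟩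
  · rw [Finset.coe_image, Finset.coe_univ, Set.image_univ, Set.range_subset_iff]
    intro k i
    have hk : (k i : ℝ) + 1 ≤ m := by exact_mod_cast (k i).2
    exact ⟨by positivity, (div_le_one (by positivity)).2 (by linarith)⟩
  · choose k hk using fun i => exists_fin_abs_sub_midpoint_le hm (hx i)
    exact (infDist_le_dist_of_mem (Finset.mem_image_of_mem centre (Finset.mem_univ k))).trans
      (dist_le_sqrt_card_mul (by positivity) hk)

end Boxes

/-! ### Optimal quantizers of the three-dimensional unit cube -/

section UnitCube

open Metric

variable {Y : Finset E3} {z : E3} {t δ : ℝ}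

lemma pow_five_div_le_sq_mul_volume (hz : z ∈ unitCube (Fin 3)) (hδ : 0 ≤ δ) (hδ' : δ ≤ 4) :
    δ ^ 5 / 1024 ≤ δ ^ 2 / 2 * volume.real (unitCube (Fin 3) ∩ closedBall z (δ / 4)) := by
  have hsqrt : √(3 : ℝ) ≤ 2 := Real.sqrt_le_iff.2 (by norm_num)
  have hvol : (δ / 8) ^ 3 ≤ volume.real (unitCube (Fin 3) ∩ closedBall z (δ / 4)) := by
    simpa using pow_card_le_volume_unitCube_inter_closedBall hz (s := δ / 8) (r := δ / 4)
      (by positivity) (by linarith) (by simp only [Fintype.card_fin, Nat.cast_ofNat]; nlinarith)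
  calc δ ^ 5 / 1024 = δ ^ 2 / 2 * (δ / 8) ^ 3 := by ring
    _ ≤ _ := by gcongr

lemma infDist_le_two_of_subset_unitCube (hYQ : (Y : Set E3) ⊆ unitCube (Fin 3))
    (hY : Y.Nonempty) (hz : z ∈ unitCube (Fin 3)) : infDist z Y ≤ 2 := by
  obtain ⟨y, hy⟩ := hY
  have hzy : dist z y ≤ √3 := by simpa using dist_le_of_mem_unitCube hz (hYQ hy)
  calc infDist z Y ≤ dist z y := infDist_le_dist_of_mem hy
    _ ≤ √3 := hzy
    _ ≤ 2 := Real.sqrt_le_iff.2 (by norm_num)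

lemma IsOptimalQuantizer.infDist_pow_five_le
    (hY : IsOptimalQuantizer volume (unitCube (Fin 3)) Y) {m : ℕ} (hm : 0 < m)
    (hmY : 2 * m ^ 3 ≤ Y.card) (hz : z ∈ unitCube (Fin 3)) :
    infDist z Y ^ 5 ≤ 13824 / (Y.card * m ^ 2) := by
  obtain ⟨G, hG, hGQ, hGcard, hcover⟩ := exists_net_unitCube (Fin 3) hm
  have hGpos := hG.card_pos
  rw [Fintype.card_fin] at hGcard
  have hgap := hY.sq_infDist_mul_measureReal_le isCompact_unitCube hG hGQ hcover (by lia) hz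
  have hvol := pow_five_div_le_sq_mul_volume hz infDist_nonneg <|
    (infDist_le_two_of_subset_unitCube hY.subset (Finset.card_pos.1 (by lia)) hz).trans
      (by norm_num)
  calc infDist z Y ^ 5 = 1024 * (infDist z Y ^ 5 / 1024) := by ring
    _ ≤ 1024 * (18 * (√(Fintype.card (Fin 3)) * (1 / (2 * m))) ^ 2 *
          volume.real (unitCube (Fin 3)) / Y.card) :=
        mul_le_mul_of_nonneg_left (hvol.trans hgap) (by norm_num)
    _ = 13824 / (Y.card * m ^ 2) := by
        rw [volume_real_unitCube, mul_pow, Real.sq_sqrt (Nat.cast_nonneg _), Fintype.card_fin]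
        have : (Y.card : ℝ) ≠ 0 := by exact_mod_cast (by lia : Y.card ≠ 0)
        field_simp
        norm_num

lemma IsOptimalQuantizer.infDist_le_eight_div
    (hY : IsOptimalQuantizer volume (unitCube (Fin 3)) Y) (ht : 10 ≤ t) (htY : t ^ 3 = Y.card)
    (hz : z ∈ unitCube (Fin 3)) : infDist z Y ≤ 8 / t := by
  have ht0 : 0 < t := by linarith
  set m := ⌊3 / 4 * t⌋₊
  have m_le : (m : ℝ) ≤ 3 / 4 * t := Nat.floor_le (by positivity)
  have le_m : 13 / 20 * t ≤ m := by linarith [Nat.lt_floor_add_one (3 / 4 * t)]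
  have hm : 0 < m := by exact_mod_cast (by linarith : (0 : ℝ) < m)
  have hmY : 2 * m ^ 3 ≤ Y.card := by
    have : 2 * (m : ℝ) ^ 3 ≤ Y.card := by
      calc 2 * (m : ℝ) ^ 3 ≤ 2 * (3 / 4 * t) ^ 3 := by gcongr
        _ ≤ t ^ 3 := by nlinarith [pow_pos ht0 3]
        _ = Y.card := htY
    exact_mod_cast this
  refine (pow_le_pow_iff_left₀ infDist_nonneg (by positivity) (by norm_num : 5 ≠ 0)).1 ?_
  calc infDist z Y ^ 5 ≤ 13824 / (t ^ 3 * m ^ 2) := htY ▸ hY.infDist_pow_five_le hm hmY hz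
    _ ≤ 13824 / (t ^ 3 * (13 / 20 * t) ^ 2) := by gcongr
    _ ≤ (8 / t) ^ 5 := by
        rw [div_pow, div_le_div_iff₀ (by positivity) (by positivity)]
        nlinarith [pow_pos ht0 5]

-- The balls of radius `1 / (2 * t)` around the points of `Y` have total volume `π / 6 < 1`.
lemma exists_lt_infDist_unitCube (hY : Y.Nonempty) (ht : 0 < t) (htY : t ^ 3 = Y.card) :
    ∃ z ∈ unitCube (Fin 3), 1 / (2 * t) < infDist z Y := by
  refine exists_lt_infDist_of_sum_measure_closedBall_lt (μ := volume) hY ?_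
  have hQ : volume (unitCube (Fin 3)) = ENNReal.ofReal 1 := by
    rw [← volume_real_unitCube (ι := Fin 3), ofReal_measureReal isCompact_unitCube.measure_ne_top]
  have hball : (Y.card : ℝ) * ((1 / (2 * t)) ^ 3 * (Real.pi * 4 / 3)) = Real.pi / 6 := by
    rw [← htY]
    field_simp
    norm_num
  simp only [EuclideanSpace.volume_closedBall_fin_three, Finset.sum_const, nsmul_eq_mul, hQ]
  rw [← ENNReal.ofReal_pow (by positivity), ← ENNReal.ofReal_mul (by positivity),
    ← ENNReal.ofReal_natCast, ← ENNReal.ofReal_mul (by positivity), hball,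
    ENNReal.ofReal_lt_ofReal_iff one_pos]
  linarith [Real.pi_lt_four]

lemma IsOptimalQuantizer.inv_pow_five_le_removalCost [DecidableEq E3]
    (hY : IsOptimalQuantizer volume (unitCube (Fin 3)) Y) (hcard : 2 ≤ Y.card) (ht : 1 ≤ t)
    (htY : t ^ 3 = Y.card) {y : E3} (hy : y ∈ Y) :
    1 / (2 ^ 15 * t ^ 5) ≤ removalCost volume (unitCube (Fin 3)) Y y := by
  obtain ⟨z, hz, hzY⟩ := exists_lt_infDist_unitCube ⟨y, hy⟩ (by positivity) htY
  have hδ : 1 / (2 * t) ≤ 1 := (div_le_one (by positivity)).2 (by linarith)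
  calc 1 / (2 ^ 15 * t ^ 5) = (1 / (2 * t)) ^ 5 / 1024 := by field_simp; norm_num
    _ ≤ (1 / (2 * t)) ^ 2 / 2 *
          volume.real (unitCube (Fin 3) ∩ closedBall z (1 / (2 * t) / 4)) :=
        pow_five_div_le_sq_mul_volume hz (by positivity) (hδ.trans (by norm_num))
    _ ≤ removalCost volume (unitCube (Fin 3)) Y y :=
        hY.le_removalCost isCompact_unitCube hcard hy hz (by positivity) hzY.le

lemma IsOptimalQuantizer.card_le_of_voronoiCell_inter_frontier_nonempty
    (hY : IsOptimalQuantizer volume (unitCube (Fin 3)) Y) (ht : 10 ≤ t) (htY : t ^ 3 = Y.card)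
    {l u : Fin 3 → ℝ} {S : Finset E3} (hSY : S ⊆ Y)
    (hS : ∀ y ∈ S, (voronoiCell (unitCube (Fin 3)) Y y ∩ frontier (euclideanBox l u)).Nonempty) :
    S.card ≤ 216 * 2 ^ 24 * t ^ 2 := by
  classical
  have hcard : 2 ≤ Y.card := by
    have : (2 : ℝ) ≤ Y.card := htY ▸ by nlinarith [pow_le_pow_left₀ (by norm_num) ht 3]
    exact_mod_cast this
  have hcount := card_mul_le_of_voronoiCell_inter_nonempty isCompact_unitCube
    (isPreconnected_euclideanBox _ _) hY.subset hcard
    (fun _ => hY.infDist_le_eight_div ht htY) hSY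
    (fun y hy => hY.inv_pow_five_le_removalCost hcard (by linarith) htY (hSY hy)) hS
  have hvol := volume_unitCube_inter_cthickening_frontier_le (r := 2 * (8 / t)) (by positivity) l u
  rw [Fintype.card_fin] at hvol
  calc (S.card : ℝ) = 2 ^ 15 * t ^ 5 * (S.card * (1 / (2 ^ 15 * t ^ 5))) := by field_simp
    _ ≤ 2 ^ 15 * t ^ 5 * ((3 * (8 / t)) ^ 2 * ((3 : ℕ) * (4 * (2 * (8 / t))))) :=
        mul_le_mul_of_nonneg_left
          (hcount.trans (mul_le_mul_of_nonneg_left hvol (by positivity))) (by positivity)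
    _ = 216 * 2 ^ 24 * t ^ 2 := by field_simp; norm_num

lemma IsMinimizer.isOptimalQuantizer {n : ℕ} (hY : IsMinimizer n Y) :
    IsOptimalQuantizer volume (unitCube (Fin 3)) Y where
  subset := hY.1
  le_of_card_eq Z hZ hcard := hY.2.2 Z hZ (hcard.trans hY.2.1)

end UnitCube

/-! ### The constants -/

section Constants

lemma four_le_omega3 : 4 ≤ omega3 := by
  rw [omega3]
  linarith [Real.pi_gt_three]

lemma omega3_le : omega3 ≤ 4.2 := by
  rw [omega3]
  linarith [Real.pi_lt_d2]

lemma sqrt_sub_one_pos : 0 < √(1 + (2 ^ 4 * 3 ^ 3 : ℝ) / (5 ^ 2 * 10 ^ 3)) - 1 :=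
  sub_pos.2 (Real.lt_sqrt_of_sq_lt (by norm_num))

lemma sqrt_sub_one_le : √(1 + (2 ^ 4 * 3 ^ 3 : ℝ) / (5 ^ 2 * 10 ^ 3)) - 1 ≤ 1 / 100 :=
  sub_le_iff_le_add.2 (Real.sqrt_le_iff.2 (by norm_num))

lemma Gamma1_pos : 0 < Gamma1 := by
  rw [Gamma1]
  positivity

lemma Gamma1_le : Gamma1 ≤ 1 / 40 :=
  div_le_div_of_nonneg_right (Real.rpow_le_one (by norm_num) (by norm_num) (by norm_num))
    (by norm_num)

lemma Gamma3_pos : 0 < Gamma3 :=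
  mul_pos (Real.rpow_pos_of_pos (by linarith [four_le_omega3]) _)
    (Real.rpow_pos_of_pos Gamma1_pos _)

lemma Gamma3_le : Gamma3 ≤ 1 / 2 := by
  have hω : omega3 ^ (-(1 : ℝ) / 5) ≤ 1 :=
    Real.rpow_le_one_of_one_le_of_nonpos (by linarith [four_le_omega3]) (by norm_num)
  have hΓ : Gamma1 ^ ((1 : ℝ) / 5) ≤ 1 / 2 := by
    rw [one_div (5 : ℝ), Real.rpow_inv_le_iff_of_pos Gamma1_pos.le (by norm_num) (by norm_num)]
    exact Gamma1_le.trans (by norm_num)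
  calc Gamma3 ≤ 1 * (1 / 2) :=
        mul_le_mul hω hΓ (Real.rpow_nonneg Gamma1_pos.le _) zero_le_one
    _ = 1 / 2 := one_mul _

lemma Gamma5_pos : 0 < Gamma5 :=
  mul_pos (mul_pos (by norm_num) sqrt_sub_one_pos) Gamma3_pos

lemma Gamma5_le : Gamma5 ≤ 1 / 800 := by
  calc Gamma5 ≤ 1 / 4 * (1 / 100) * (1 / 2) :=
        mul_le_mul (mul_le_mul_of_nonneg_left sqrt_sub_one_le (by norm_num)) Gamma3_le
          Gamma3_pos.le (by norm_num)
    _ = 1 / 800 := by norm_num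

lemma two_le_Gamma4_quotient :
    2 ≤ 2 * (12 : ℝ) ^ ((1 : ℝ) / 4) * (16 : ℝ) ^ ((1 : ℝ) / 3) /
      (Real.pi ^ ((1 : ℝ) / 4) * omega3 ^ ((1 : ℝ) / 12)) := by
  have hω0 : 0 < omega3 := by linarith [four_le_omega3]
  rw [le_div_iff₀ (by positivity), mul_assoc 2]
  gcongr
  · linarith [Real.pi_lt_four]
  · calc omega3 ^ ((1 : ℝ) / 12) ≤ (16 : ℝ) ^ ((1 : ℝ) / 12) := by
          gcongr
          linarith [omega3_le]
      _ ≤ (16 : ℝ) ^ ((1 : ℝ) / 3) := by gcongr <;> norm_num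

lemma ten_le_sqrt_sub_one_rpow :
    10 ≤ (√(1 + (2 ^ 4 * 3 ^ 3 : ℝ) / (5 ^ 2 * 10 ^ 3)) - 1) ^ (-(1 : ℝ) / 2) := by
  calc (10 : ℝ) = (1 / 100) ^ (-(1 : ℝ) / 2) := by
        rw [neg_div, Real.rpow_neg (by norm_num), ← Real.sqrt_eq_rpow,
          show (1 / 100 : ℝ) = (1 / 10) ^ 2 by norm_num, Real.sqrt_sq (by norm_num)]
        norm_num
    _ ≤ _ := Real.rpow_le_rpow_of_nonpos sqrt_sub_one_pos sqrt_sub_one_le (by norm_num)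

lemma twenty_le_Gamma4 : 20 ≤ Gamma4 := by
  have hlast : 1 ≤ ((5 ^ 2 * 10 ^ 3 : ℝ) / (2 ^ 2 * 3 ^ 3)) ^ ((1 : ℝ) / 4) :=
    Real.one_le_rpow (by norm_num) (by norm_num)
  calc (20 : ℝ) = 2 * 10 * 1 := by norm_num
    _ ≤ Gamma4 := by
        have hprod := mul_le_mul two_le_Gamma4_quotient ten_le_sqrt_sub_one_rpow (by norm_num)
          (zero_le_two.trans two_le_Gamma4_quotient)
        exact mul_le_mul hprod hlast zero_le_one ((by norm_num : (0 : ℝ) ≤ 2 * 10).trans hprod)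

lemma le_six_mul_Gamma4_div : 216 * 2 ^ 24 ≤ 6 * Gamma4 / (omega3 * Gamma5 ^ 3) := by
  have hω : 0 < omega3 := by linarith [four_le_omega3]
  have hΓ := Gamma5_pos
  rw [le_div_iff₀ (by positivity)]
  calc 216 * 2 ^ 24 * (omega3 * Gamma5 ^ 3) ≤ 216 * 2 ^ 24 * (4.2 * (1 / 800) ^ 3) := by
        gcongr
        exacts [omega3_le, Gamma5_le]
    _ ≤ 6 * 20 := by norm_num
    _ ≤ 6 * Gamma4 := by gcongr; exact twenty_le_Gamma4

end Constants

/-! ### Cells meeting the boundary of a box -/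

theorem stmt_12_general (l u : Fin 3 → ℝ) {n : ℕ} (hn : 1000 ≤ n) {Y : Finset E3}
    (hY : IsMinimizer n Y) :
    ({y : E3 | y ∈ Y ∧ (vorCell Y y ∩ frontier (euclideanBox l u)).Nonempty}.ncard : ℝ) ≤
      (6 * Gamma4 / (omega3 * Gamma5 ^ 3)) * (n : ℝ) ^ ((2 : ℝ) / 3) := by
  classical
  set t : ℝ := (n : ℝ) ^ ((1 : ℝ) / 3)
  have htn : t ^ 3 = n := by
    rw [← Real.rpow_mul_natCast n.cast_nonneg]
    norm_num
  have ht : 10 ≤ t := by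
    refine (pow_le_pow_iff_left₀ (by norm_num) (by positivity) (by norm_num : 3 ≠ 0)).1 ?_
    rw [htn]
    exact_mod_cast hn
  have ht2 : (n : ℝ) ^ ((2 : ℝ) / 3) = t ^ 2 := by
    rw [← Real.rpow_mul_natCast n.cast_nonneg]
    norm_num
  have hS := hY.isOptimalQuantizer.card_le_of_voronoiCell_inter_frontier_nonempty
    (l := l) (u := u) ht (by rw [htn, hY.2.1]) (Y.filter_subset _)
    fun y hy => (Finset.mem_filter.1 hy).2
  rw [← Finset.coe_filter, Set.ncard_coe_finset, ht2]
  exact hS.trans (by gcongr; exact le_six_mul_Gamma4_div)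

theorem stmt_12 (Ω : Set E3) (a : E3) (L : ℝ) (hL : 0 < L)
    (hΩ : Ω = {x : E3 | ∀ i, x i ∈ Set.Icc (a i) (a i + L)}) (hΩQ : Ω ⊆ Qcube) :
    ∀ᶠ n : ℕ in Filter.atTop, ∀ Y : Finset E3, IsMinimizer n Y →
      (({y : E3 | y ∈ Y ∧ (vorCell Y y ∩ frontier Ω).Nonempty}.ncard : ℝ)) ≤
        (6 * Gamma4 / (omega3 * Gamma5 ^ 3)) * (n : ℝ) ^ ((2 : ℝ) / 3) := by
  filter_upwards [Filter.eventually_ge_atTop 1000] with n hn Y hY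
  exact hΩ ▸ stmt_12_general a (fun i => a i + L) hn hY
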